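/- Let v⁺, v⁻ : ℝ² → ℝ be three times continuously differentiable (ContDiff ℝ 3), fix (x,y) ∈ ℝ², and for each h > 0 let ξ_h ∈ [x−h, x] (the horizontal intersection abscissa of the interface with the grid line). Define the jumps at (ξ_h, y) by [v] = v⁺(ξ_h,y) − v⁻(ξ_h,y), [v_x] = ∂_x v⁺(ξ_h,y) − ∂_x v⁻(ξ_h,y), [v_xx] = ∂_xx v⁺(ξ_h,y) − ∂_xx v⁻(ξ_h,y). Define the horizontal truncation error at the interior node, E_h = (v⁻(x+h,y) + v⁺(x−h,y) − 2·v⁻(x,y))/h² − ∂_xx v⁻(x,y), and the correction C_h⁻ = (1/h²)·([v] + [v_x]·(x−h−ξ_h) + (1/2)·[v_xx]·(x−h−ξ_h)²). Then there exist constants C > 0 and δ > 0 such that for all 0 < h < δ and any choice of ξ_h ∈ [x−h, x], |E_h − C_h⁻| ≤ C·h. -/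

import Mathlib

theorem kfbi_step (F G : ℝ → ℝ) (hF : ∀ u, HasDerivAt F (G u) u) (s t K : ℝ) (h0 : F s = 0)
    (hG : ∀ u ∈ Set.uIcc s t, |G u| ≤ K) : |F t| ≤ K * |t - s| := by
  have := Convex.norm_image_sub_le_of_norm_hasDerivWithin_le (f := F) (f' := G) (C := K)
    (s := Set.uIcc s t) (x := s) (y := t) (fun u _ => (hF u).hasDerivWithinAt)
    (fun u hu => hG u hu) (convex_uIcc s t) Set.left_mem_uIcc Set.right_mem_uIcc
  simpa [h0] using this

theorem kfbi_taylor (f : ℝ → ℝ) (hf : ContDiff ℝ 3 f) (x : ℝ) :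
    ∃ M : ℝ, 0 ≤ M ∧ ∀ s ∈ Set.Icc (x - 1) (x + 1), ∀ t ∈ Set.Icc (x - 1) (x + 1),
      |f t - f s - deriv f s * (t - s) - 1 / 2 * iteratedDeriv 2 f s * (t - s) ^ 2|
        ≤ M * |t - s| ^ 3 := by
  have hc : ContinuousOn (iteratedDeriv 3 f) (Set.Icc (x - 1) (x + 1)) :=
    (hf.continuous_iteratedDeriv 3 (by norm_num)).continuousOn
  obtain ⟨M, hM⟩ := isCompact_Icc.exists_bound_of_continuousOn hc
  have d0 : ∀ u, HasDerivAt f (deriv f u) u := fun u =>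
    (hf.differentiable (by norm_num) u).hasDerivAt
  have d1 : ∀ u, HasDerivAt (deriv f) (iteratedDeriv 2 f u) u := fun u => by
    have := (hf.differentiable_iteratedDeriv 1 (by norm_num) u).hasDerivAt
    rwa [← iteratedDeriv_succ, iteratedDeriv_one] at this
  have d2 : ∀ u, HasDerivAt (iteratedDeriv 2 f) (iteratedDeriv 3 f u) u := fun u => by
    have := (hf.differentiable_iteratedDeriv 2 (by norm_num) u).hasDerivAt
    rwa [← iteratedDeriv_succ] at this
  have hM0 : 0 ≤ M := (norm_nonneg _).trans (hM x ⟨by linarith, by linarith⟩)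
  refine ⟨M, hM0, fun s hs t ht => ?_⟩
  have sub : ∀ t ∈ Set.Icc (x - 1) (x + 1), Set.uIcc s t ⊆ Set.Icc (x - 1) (x + 1) :=
    fun t ht => Set.uIcc_subset_Icc hs ht
  have le : ∀ t, ∀ u ∈ Set.uIcc s t, |u - s| ≤ |t - s| :=
    fun t u hu => Set.abs_sub_left_of_mem_uIcc hu
  have r2 : ∀ t ∈ Set.Icc (x - 1) (x + 1),
      |iteratedDeriv 2 f t - iteratedDeriv 2 f s| ≤ M * |t - s| := fun t ht =>
    kfbi_step (fun t => iteratedDeriv 2 f t - iteratedDeriv 2 f s) (iteratedDeriv 3 f)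
      (fun u => (d2 u).sub_const _) s t M (by simp) (fun u hu => hM u (sub t ht hu))
  have r1 : ∀ t ∈ Set.Icc (x - 1) (x + 1),
      |deriv f t - deriv f s - iteratedDeriv 2 f s * (t - s)| ≤ M * |t - s| * |t - s| :=
    fun t ht =>
    kfbi_step (fun t => deriv f t - deriv f s - iteratedDeriv 2 f s * (t - s))
      (fun t => iteratedDeriv 2 f t - iteratedDeriv 2 f s)
      (fun u => by
        have := ((d1 u).sub_const (deriv f s)).sub
          (((hasDerivAt_id u).sub_const s).const_mul (iteratedDeriv 2 f s))
        exact this.congr_deriv (by simp)) s t _ (by simp)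
      (fun u hu => (r2 u (sub t ht hu)).trans
        (mul_le_mul_of_nonneg_left (le t u hu) hM0))
  have r0 := kfbi_step
      (fun t => f t - f s - deriv f s * (t - s) - 1 / 2 * iteratedDeriv 2 f s * (t - s) ^ 2)
      (fun t => deriv f t - deriv f s - iteratedDeriv 2 f s * (t - s))
      (fun u => by
        have := (((d0 u).sub_const (f s)).sub
          (((hasDerivAt_id u).sub_const s).const_mul (deriv f s))).sub
          ((((hasDerivAt_id u).sub_const s).pow 2).const_mul (1 / 2 * iteratedDeriv 2 f s))
        exact this.congr_deriv (by simp; ring)) s t (M * |t - s| * |t - s|) (by simp)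
      (fun u hu => (r1 u (sub t ht hu)).trans (by
        have := le t u hu
        gcongr))
  calc _ ≤ _ := r0
    _ = _ := by ring

/-- First-order accuracy of the KFBI horizontal correction at an interior
irregular node: the corrected truncation error is `O(h)`. -/
theorem kfbi_horizontal_correction_interior_first_order
    (vp vm : ℝ × ℝ → ℝ) (hvp : ContDiff ℝ 3 vp) (hvm : ContDiff ℝ 3 vm)
    (x y : ℝ) :
    ∃ C > 0, ∃ δ > 0, ∀ h : ℝ, 0 < h → h < δ →
      ∀ ξ : ℝ, ξ ∈ Set.Icc (x - h) x →
      |((vm (x + h, y) + vp (x - h, y) - 2 * vm (x, y)) / h ^ 2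
            - iteratedDeriv 2 (fun t => vm (t, y)) x)
        - ((1 / h ^ 2) *
            ((vp (ξ, y) - vm (ξ, y))
              + (deriv (fun t => vp (t, y)) ξ - deriv (fun t => vm (t, y)) ξ) * (x - h - ξ)
              + (1 / 2) *
                  (iteratedDeriv 2 (fun t => vp (t, y)) ξ
                    - iteratedDeriv 2 (fun t => vm (t, y)) ξ) * (x - h - ξ) ^ 2))|
        ≤ C * h := by
  have cp : ContDiff ℝ 3 (fun t : ℝ => vp (t, y)) := hvp.comp (by fun_prop)
  have cm : ContDiff ℝ 3 (fun t : ℝ => vm (t, y)) := hvm.comp (by fun_prop)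
  obtain ⟨P, hP0, hP⟩ := kfbi_taylor _ cp x
  obtain ⟨M, hM0, hM⟩ := kfbi_taylor _ cm x
  refine ⟨P + 3 * M + 1, by positivity, 1, one_pos, fun h h0 h1 ξ hξ => ?_⟩
  obtain ⟨hξ1, hξ2⟩ := hξ
  have mξ : ξ ∈ Set.Icc (x - 1) (x + 1) := ⟨by linarith, by linarith⟩
  have mx : x ∈ Set.Icc (x - 1) (x + 1) := ⟨by linarith, by linarith⟩
  have ml : x - h ∈ Set.Icc (x - 1) (x + 1) := ⟨by linarith, by linarith⟩
  have mr : x + h ∈ Set.Icc (x - 1) (x + 1) := ⟨by linarith, by linarith⟩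
  have key : |x - h - ξ| ^ 3 ≤ h ^ 3 := by
    have : |x - h - ξ| ≤ h := abs_le.2 ⟨by linarith, by linarith⟩
    gcongr
  have e1 := (hP ξ mξ _ ml).trans (mul_le_mul_of_nonneg_left key hP0)
  have e2 := (hM ξ mξ _ ml).trans (mul_le_mul_of_nonneg_left key hM0)
  have e3 := hM x mx _ ml
  have e4 := hM x mx _ mr
  rw [show x - h - x = -h by ring, abs_neg, abs_of_pos h0] at e3
  rw [show x + h - x = h by ring, abs_of_pos h0] at e4
  have h3 : 0 < h ^ 3 := by positivity
  generalize iteratedDeriv 2 (fun t => vm (t, y)) x = a at *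
  generalize iteratedDeriv 2 (fun t => vm (t, y)) ξ = b at *
  generalize iteratedDeriv 2 (fun t => vp (t, y)) ξ = c at *
  generalize deriv (fun t => vm (t, y)) x = a' at *
  generalize deriv (fun t => vm (t, y)) ξ = b' at *
  generalize deriv (fun t => vp (t, y)) ξ = c' at *
  have h2 : 0 < h ^ 2 := by positivity
  have eq : ((vm (x + h, y) + vp (x - h, y) - 2 * vm (x, y)) / h ^ 2 - a)
        - ((1 / h ^ 2) * ((vp (ξ, y) - vm (ξ, y)) + (c' - b') * (x - h - ξ)
              + (1 / 2) * (c - b) * (x - h - ξ) ^ 2))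
      = (vm (x + h, y) + vp (x - h, y) - 2 * vm (x, y) - a * h ^ 2
        - ((vp (ξ, y) - vm (ξ, y)) + (c' - b') * (x - h - ξ)
              + (1 / 2) * (c - b) * (x - h - ξ) ^ 2)) / h ^ 2 := by
    field_simp
  rw [eq, abs_div, abs_of_pos h2, div_le_iff₀ h2]
  rw [abs_le] at e1 e2 e3 e4 ⊢
  obtain ⟨e1, e1'⟩ := e1
  obtain ⟨e2, e2'⟩ := e2
  obtain ⟨e3, e3'⟩ := e3
  obtain ⟨e4, e4'⟩ := e4
  constructor <;> linarith
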